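/- arXiv:1301.4421 — 2 statements merged into one kernel-verified Lean document; each statement's English description precedes it below -/
import Mathlib

section
/- Suppose M and N are maps that are both I-colorable for some I ⊆ {0,1,2}, and suppose the connected sum M⊕N exists with respect to flags f_M and f_N. Then M⊕N is I-colorable. -/
/-- A (combinatorial) map: a nonempty set of flags `Ω` together with three
permutations `r 0, r 1, r 2` which are fixed-point-free involutions, such that
`r 0` and `r 2` commute with fixed-point-free product, and such that the
connection group `⟨r 0, r 1, r 2⟩` acts transitively on `Ω`. -/
structure CMap (Ω : Type) where
  r : Fin 3 → Equiv.Perm Ω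
  nonempty : Nonempty Ω
  invol : ∀ (i : Fin 3) (f : Ω), r i (r i f) = f
  fpf : ∀ (i : Fin 3) (f : Ω), r i f ≠ f
  comm02 : ∀ f : Ω, r 0 (r 2 f) = r 2 (r 0 f)
  fpf02 : ∀ f : Ω, r 0 (r 2 f) ≠ f
  flag_transitive : ∀ f g : Ω,
    ∃ w ∈ Subgroup.closure ({r 0, r 1, r 2} : Set (Equiv.Perm Ω)), w f = g

/-- `a` is an `I`-coloring with respect to the connections `r`. -/
def IsColoringOn {Ω : Type} (r : Fin 3 → Ω → Ω) (I : Set (Fin 3)) (a : Ω → ZMod 2) : Prop :=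
  ∀ (f : Ω) (j : Fin 3), (j ∈ I → a (r j f) = a f + 1) ∧ (j ∉ I → a (r j f) = a f)

/-- There exists an `I`-coloring with respect to the connections `r`. -/
def ColorableOn {Ω : Type} (r : Fin 3 → Ω → Ω) (I : Set (Fin 3)) : Prop :=
  ∃ a : Ω → ZMod 2, IsColoringOn r I a

/-- `a` is an `I`-coloring of the map `M`. -/
def CMap.IsColoring {Ω : Type} (M : CMap Ω) (I : Set (Fin 3)) (a : Ω → ZMod 2) : Prop :=
  IsColoringOn (fun j f => M.r j f) I a

/-- The map `M` admits an `I`-coloring. -/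
def CMap.Colorable {Ω : Type} (M : CMap Ω) (I : Set (Fin 3)) : Prop :=
  ∃ a : Ω → ZMod 2, M.IsColoring I a

/-- `T M` is the collection of subsets `I ⊆ {0,1,2}` for which `M` is `I`-colorable. -/
def CMap.T {Ω : Type} (M : CMap Ω) : Set (Set (Fin 3)) :=
  {I | M.Colorable I}

/-- The face of `M` containing the flag `f`: the orbit of `f` under `⟨r 0, r 1⟩`. -/
def CMap.faceOf {Ω : Type} (M : CMap Ω) (f : Ω) : Set Ω :=
  {g | ∃ w ∈ Subgroup.closure ({M.r 0, M.r 1} : Set (Equiv.Perm Ω)), w f = g}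

/-- `g ↦ g·r₀r₁`, so `(M.faceStep)^[j] f = f·(r₀r₁)ʲ`. -/
def CMap.faceStep {Ω : Type} (M : CMap Ω) (g : Ω) : Ω :=
  M.r 1 (M.r 0 g)

/-- The flag set `(Ω ∖ F_M) ∪ (Ω' ∖ F_N)` of the connected sum. -/
def connSumFlags {Ω Ω' : Type} (M : CMap Ω) (N : CMap Ω') (fM : Ω) (fN : Ω') : Set (Ω ⊕ Ω') :=
  {x | Sum.elim (fun g => g ∉ M.faceOf fM) (fun g => g ∉ N.faceOf fN) x}

/-!
An `I`-coloring changes by the same amount along the same word in the connections, whatever the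
map. Hence, for colorings `a` of `M` and `b` of `N`, the difference `b - a` is constant on pairs of
corresponding flags of the two faces. Shifting `b` by a constant, one may take this difference to
be the increment `ε` of a coloring across `r₂`. If `g` and `g'` are corresponding flags, the new
connection joins `g·r₂`, of color `a g + ε`, to `g'·r₂`, of color `b g' + ε = a g + ε + ε`, so it
is colored correctly. Every deleted flag is accounted for because the face of `f`, being a finite
orbit of a dihedral group, consists of the images of `f` and `f·r₁` under the powers `(r₀r₁)ʲ` with
`j ≥ 0`.
-/

section GroupTheory

variable {G : Type*} [Group G]

theorem exists_eq_zpow_or_eq_zpow_mul_of_mem_closure_pair {a b w : G} (ha : a * a = 1)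
    (hb : b * b = 1) (hw : w ∈ Subgroup.closure {a, b}) :
    ∃ n : ℤ, w = (b * a) ^ n ∨ w = (b * a) ^ n * b := by
  have hinv : (b * a)⁻¹ = a * b := by
    rw [mul_inv_rev, inv_eq_of_mul_eq_one_left ha, inv_eq_of_mul_eq_one_left hb]
  have hba (n : ℤ) : b * (b * a) ^ n = (b * a) ^ (-n) * b := by
    have : SemiconjBy b (b * a) (b * a)⁻¹ := by
      rw [SemiconjBy, hinv, mul_assoc a, hb, mul_one, ← mul_assoc, hb, one_mul]
    rw [(this.zpow_right n).eq, inv_zpow']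
  have hb_mul {v : G} : (∃ n : ℤ, v = (b * a) ^ n ∨ v = (b * a) ^ n * b) →
      ∃ n : ℤ, b * v = (b * a) ^ n ∨ b * v = (b * a) ^ n * b := by
    rintro ⟨n, rfl | rfl⟩
    · exact ⟨-n, .inr (hba n)⟩
    · exact ⟨-n, .inl (by rw [← mul_assoc, hba, mul_assoc, hb, mul_one])⟩
  have ha_mul {v : G} : (∃ n : ℤ, v = (b * a) ^ n ∨ v = (b * a) ^ n * b) →
      ∃ n : ℤ, a * v = (b * a) ^ n ∨ a * v = (b * a) ^ n * b := by
    rintro ⟨n, hn⟩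
    have : a * v = b * (b * a * v) := by rw [← mul_assoc, ← mul_assoc, hb, one_mul]
    rw [this]
    exact hb_mul ⟨1 + n, by simpa only [zpow_one_add, mul_assoc, mul_right_inj] using hn⟩
  induction hw using Subgroup.closure_induction_left with
  | one => exact ⟨0, .inl (zpow_zero _).symm⟩
  | mul_left x hx y _ ih =>
    rcases hx with rfl | rfl
    exacts [ha_mul ih, hb_mul ih]
  | inv_mul_cancel x hx y _ ih =>
    rcases hx with rfl | rfl
    · rw [inv_eq_of_mul_eq_one_left ha]
      exact ha_mul ih
    · rw [inv_eq_of_mul_eq_one_left hb]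
      exact hb_mul ih

theorem exists_pow_smul_eq_zpow_smul {α : Type*} [MulAction G α] (g : G) (x : α)
    [Finite (MulAction.orbit (Subgroup.zpowers g) x)] (n : ℤ) :
    ∃ k : ℕ, g ^ k • x = g ^ n • x := by
  have hpos : (Function.minimalPeriod (g • ·) x : ℤ) ≠ 0 :=
    Nat.cast_ne_zero.2 (NeZero.ne _)
  refine ⟨(n % Function.minimalPeriod (g • ·) x).toNat, ?_⟩
  rw [← zpow_natCast, Int.toNat_of_nonneg (Int.emod_nonneg _ hpos),
    MulAction.zpow_smul_mod_minimalPeriod]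

end GroupTheory

section Coloring

variable {Ω Ω' : Type} {I : Set (Fin 3)} {r : Fin 3 → Ω → Ω} {s : Fin 3 → Ω' → Ω'}
  {a : Ω → ZMod 2} {b : Ω' → ZMod 2}

theorem isColoringOn_iff_indicator :
    IsColoringOn r I a ↔ ∀ f j, a (r j f) = a f + I.indicator 1 j := by
  refine forall₂_congr fun f j => ?_
  by_cases hj : j ∈ I <;> simp [hj]

theorem IsColoringOn.apply (ha : IsColoringOn r I a) (f : Ω) (j : Fin 3) :
    a (r j f) = a f + I.indicator 1 j :=
  isColoringOn_iff_indicator.1 ha f j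

theorem IsColoringOn.add_const (ha : IsColoringOn r I a) (c : ZMod 2) :
    IsColoringOn r I fun f => a f + c :=
  isColoringOn_iff_indicator.2 fun f j => by rw [ha.apply, add_right_comm]

theorem IsColoringOn.apply_sub_apply (ha : IsColoringOn r I a) (hb : IsColoringOn s I b)
    (j : Fin 3) (f : Ω) (f' : Ω') : b (s j f') - a (r j f) = b f' - a f := by
  rw [ha.apply, hb.apply, add_sub_add_right_eq_sub]

end Coloring

namespace CMap

variable {Ω Ω' : Type} {M : CMap Ω} {N : CMap Ω'} {I : Set (Fin 3)}
  {a : Ω → ZMod 2} {b : Ω' → ZMod 2}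

theorem r_mul_self (M : CMap Ω) (i : Fin 3) : M.r i * M.r i = 1 :=
  Equiv.ext (M.invol i)

theorem faceStep_iterate (M : CMap Ω) (j : ℕ) (f : Ω) :
    M.faceStep^[j] f = ((M.r 1 * M.r 0) ^ j) f :=
  congrFun (Equiv.Perm.iterate_eq_pow (M.r 1 * M.r 0) j) f

theorem r_zero_mem_closure (M : CMap Ω) : M.r 0 ∈ Subgroup.closure {M.r 0, M.r 1} :=
  Subgroup.subset_closure (.inl rfl)

theorem r_one_mem_closure (M : CMap Ω) : M.r 1 ∈ Subgroup.closure {M.r 0, M.r 1} :=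
  Subgroup.subset_closure (.inr rfl)

theorem apply_mem_faceOf {w : Equiv.Perm Ω} (hw : w ∈ Subgroup.closure {M.r 0, M.r 1}) {f g : Ω}
    (hg : g ∈ M.faceOf f) : w g ∈ M.faceOf f := by
  obtain ⟨v, hv, rfl⟩ := hg
  exact ⟨w * v, mul_mem hw hv, rfl⟩

/-- The `j`-th flag `f·(r₀r₁)ʲ` of the face of `f`, or `f·r₁(r₀r₁)ʲ` if `reflected` is true.
The connected sum matches the flags of two faces that have the same parameters. -/
def faceFlag (M : CMap Ω) (f : Ω) (reflected : Bool) (j : ℕ) : Ω :=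
  M.faceStep^[j] (bif reflected then M.r 1 f else f)

theorem faceFlag_mem_faceOf (M : CMap Ω) (f : Ω) (reflected : Bool) (j : ℕ) :
    M.faceFlag f reflected j ∈ M.faceOf f := by
  have hf : f ∈ M.faceOf f := ⟨1, one_mem _, rfl⟩
  rw [faceFlag, faceStep_iterate]
  refine apply_mem_faceOf (pow_mem (mul_mem M.r_one_mem_closure M.r_zero_mem_closure) j) ?_
  cases reflected
  exacts [hf, apply_mem_faceOf M.r_one_mem_closure hf]

theorem exists_faceStep_iterate_eq_zpow {f g : Ω} (hf : (M.faceOf f).Finite)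
    (hg : g ∈ M.faceOf f) (n : ℤ) :
    ∃ j : ℕ, M.faceStep^[j] g = ((M.r 1 * M.r 0) ^ n) g := by
  have hsub : MulAction.orbit (Subgroup.zpowers (M.r 1 * M.r 0)) g ⊆ M.faceOf f := by
    rintro _ ⟨⟨_, k, rfl⟩, rfl⟩
    exact apply_mem_faceOf (zpow_mem (mul_mem M.r_one_mem_closure M.r_zero_mem_closure) k) hg
  have : Finite (MulAction.orbit (Subgroup.zpowers (M.r 1 * M.r 0)) g) := hf.subset hsub
  simpa only [faceStep_iterate, Equiv.Perm.smul_def] using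
    exists_pow_smul_eq_zpow_smul (M.r 1 * M.r 0) g n

theorem exists_faceFlag_eq {f g : Ω} (hf : (M.faceOf f).Finite) (hg : g ∈ M.faceOf f) :
    ∃ reflected j, M.faceFlag f reflected j = g := by
  obtain ⟨w, hw, rfl⟩ := hg
  obtain ⟨n, rfl | rfl⟩ := exists_eq_zpow_or_eq_zpow_mul_of_mem_closure_pair
    (M.r_mul_self 0) (M.r_mul_self 1) hw
  · exact ⟨false, exists_faceStep_iterate_eq_zpow hf (M.faceFlag_mem_faceOf f false 0) n⟩
  · exact ⟨true, exists_faceStep_iterate_eq_zpow hf (M.faceFlag_mem_faceOf f true 0) n⟩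

theorem exists_eq_r_two_faceFlag {f g : Ω} (hf : (M.faceOf f).Finite)
    (hg : M.r 2 g ∈ M.faceOf f) : ∃ reflected j, g = M.r 2 (M.faceFlag f reflected j) := by
  obtain ⟨reflected, j, h⟩ := exists_faceFlag_eq hf hg
  exact ⟨reflected, j, by rw [h, M.invol]⟩

theorem IsColoring.faceFlag_sub_faceFlag (ha : M.IsColoring I a) (hb : N.IsColoring I b)
    (f : Ω) (f' : Ω') (reflected : Bool) (j : ℕ) :
    b (N.faceFlag f' reflected j) - a (M.faceFlag f reflected j) = b f' - a f := by
  induction j with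
  | zero =>
    cases reflected
    exacts [rfl, ha.apply_sub_apply hb 1 f f']
  | succ j ih =>
    simp only [faceFlag, Function.iterate_succ_apply', faceStep] at ih ⊢
    rw [ha.apply_sub_apply hb 1, ha.apply_sub_apply hb 0, ih]

end CMap

/-- The map `P` on the flags outside two faces has the connections of the connected sum of `M` and
`N` with respect to `fM` and `fN`. The conditions on the two faces under which the connected sum is
formed are not included. -/
structure IsConnSum {Ω Ω' : Type} (M : CMap Ω) (N : CMap Ω') (fM : Ω) (fN : Ω')
    (P : CMap (connSumFlags M N fM fN)) : Prop where
  r_of_ne_two : ∀ j ≠ 2, ∀ x, (P.r j x).1 = Sum.map (M.r j) (N.r j) x.1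
  r_two_inl : ∀ x g, x.1 = Sum.inl g → M.r 2 g ∉ M.faceOf fM → (P.r 2 x).1 = Sum.inl (M.r 2 g)
  r_two_inr : ∀ x g, x.1 = Sum.inr g → N.r 2 g ∉ N.faceOf fN → (P.r 2 x).1 = Sum.inr (N.r 2 g)
  r_two_faceFlag : ∀ reflected j x, x.1 = Sum.inl (M.r 2 (M.faceFlag fM reflected j)) →
    (P.r 2 x).1 = Sum.inr (N.r 2 (N.faceFlag fN reflected j))

namespace IsConnSum

variable {Ω Ω' : Type} {M : CMap Ω} {N : CMap Ω'} {fM : Ω} {fN : Ω'}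
  {P : CMap (connSumFlags M N fM fN)} {I : Set (Fin 3)} {a : Ω → ZMod 2} {b : Ω' → ZMod 2}

theorem elim_r_of_ne_two (hP : IsConnSum M N fM fN P) (ha : M.IsColoring I a)
    (hb : N.IsColoring I b) {j : Fin 3} (hj : j ≠ 2) (x : connSumFlags M N fM fN) :
    Sum.elim a b (P.r j x).1 = Sum.elim a b x.1 + I.indicator 1 j := by
  rw [hP.r_of_ne_two j hj]
  rcases x.1 with g | g
  exacts [ha.apply g j, hb.apply g j]

theorem elim_r_two_faceFlag (hP : IsConnSum M N fM fN P) (ha : M.IsColoring I a)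
    (hb : N.IsColoring I b) (hab : b fN = a fM + I.indicator 1 2) {reflected : Bool} {j : ℕ}
    {x : connSumFlags M N fM fN} (hx : x.1 = Sum.inl (M.r 2 (M.faceFlag fM reflected j))) :
    Sum.elim a b (P.r 2 x).1 = Sum.elim a b x.1 + I.indicator 1 2 := by
  rw [hP.r_two_faceFlag _ _ _ hx, hx, Sum.elim_inl, Sum.elim_inr]
  have hr₂ := ha.apply_sub_apply hb 2 (M.faceFlag fM reflected j) (N.faceFlag fN reflected j)
  linear_combination hr₂ + ha.faceFlag_sub_faceFlag hb fM fN reflected j + hab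

theorem elim_r_two_inl (hP : IsConnSum M N fM fN P) (hM : (M.faceOf fM).Finite)
    (ha : M.IsColoring I a) (hb : N.IsColoring I b) (hab : b fN = a fM + I.indicator 1 2)
    {x : connSumFlags M N fM fN} {g : Ω} (hx : x.1 = Sum.inl g) :
    Sum.elim a b (P.r 2 x).1 = Sum.elim a b x.1 + I.indicator 1 2 := by
  by_cases hg : M.r 2 g ∈ M.faceOf fM
  · obtain ⟨reflected, j, rfl⟩ := CMap.exists_eq_r_two_faceFlag hM hg
    exact hP.elim_r_two_faceFlag ha hb hab hx
  · rw [hP.r_two_inl x g hx hg, hx]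
    exact ha.apply g 2

theorem elim_r_two_inr (hP : IsConnSum M N fM fN P)
    (hM₂ : ∀ g ∈ M.faceOf fM, M.r 2 g ∉ M.faceOf fM) (hN : (N.faceOf fN).Finite)
    (ha : M.IsColoring I a) (hb : N.IsColoring I b) (hab : b fN = a fM + I.indicator 1 2)
    {x : connSumFlags M N fM fN} {g : Ω'} (hx : x.1 = Sum.inr g) :
    Sum.elim a b (P.r 2 x).1 = Sum.elim a b x.1 + I.indicator 1 2 := by
  by_cases hg : N.r 2 g ∈ N.faceOf fN
  · obtain ⟨reflected, j, rfl⟩ := CMap.exists_eq_r_two_faceFlag hN hg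
    let y : connSumFlags M N fM fN :=
      ⟨Sum.inl (M.r 2 (M.faceFlag fM reflected j)), hM₂ _ (M.faceFlag_mem_faceOf fM reflected j)⟩
    have hxy : x = P.r 2 y := Subtype.ext (hx.trans (hP.r_two_faceFlag reflected j y rfl).symm)
    rw [hxy, P.invol, hP.elim_r_two_faceFlag (x := y) ha hb hab rfl, add_assoc,
      CharTwo.add_self_eq_zero, add_zero]
  · rw [hP.r_two_inr x g hx hg, hx]
    exact hb.apply g 2

theorem isColoring_elim (hP : IsConnSum M N fM fN P)
    (hM₂ : ∀ g ∈ M.faceOf fM, M.r 2 g ∉ M.faceOf fM)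
    (hM : (M.faceOf fM).Finite) (hN : (N.faceOf fN).Finite)
    (ha : M.IsColoring I a) (hb : N.IsColoring I b) (hab : b fN = a fM + I.indicator 1 2) :
    P.IsColoring I fun x => Sum.elim a b x.1 := by
  refine isColoringOn_iff_indicator.2 fun x j => ?_
  obtain rfl | hj := eq_or_ne j 2
  · rcases hx : x.1 with g | g <;> rw [← hx]
    exacts [hP.elim_r_two_inl hM ha hb hab hx, hP.elim_r_two_inr hM₂ hN ha hb hab hx]
  · exact hP.elim_r_of_ne_two ha hb hj x

end IsConnSum

/-- if `M` and `N` are `I`-colorable and the connected sum `M ⊕ N`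
(with respect to flags `fM`, `fN` whose faces are finite of the same size and
not `r₂`-connected to themselves) exists — formalized as a map `P` on
`(Ω ∖ F_M) ∪ (Ω' ∖ F_N)` whose connections are as prescribed — then `M ⊕ N`
is `I`-colorable. -/
theorem connSum_colorable {Ω Ω' : Type} (M : CMap Ω) (N : CMap Ω') (fM : Ω) (fN : Ω')
    (hM2 : ∀ g ∈ M.faceOf fM, M.r 2 g ∉ M.faceOf fM)
    (hN2 : ∀ g ∈ N.faceOf fN, N.r 2 g ∉ N.faceOf fN)
    (hMfin : (M.faceOf fM).Finite) (hNfin : (N.faceOf fN).Finite)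
    (hcard : (M.faceOf fM).ncard = (N.faceOf fN).ncard)
    (P : CMap ↥(connSumFlags M N fM fN))
    (h0 : ∀ x : ↥(connSumFlags M N fM fN),
      (P.r 0 x).1 = Sum.map (M.r 0) (N.r 0) x.1)
    (h1 : ∀ x : ↥(connSumFlags M N fM fN),
      (P.r 1 x).1 = Sum.map (M.r 1) (N.r 1) x.1)
    (h2a : ∀ (x : ↥(connSumFlags M N fM fN)) (g : Ω), x.1 = Sum.inl g →
      M.r 2 g ∉ M.faceOf fM → (P.r 2 x).1 = Sum.inl (M.r 2 g))
    (h2b : ∀ (x : ↥(connSumFlags M N fM fN)) (g : Ω'), x.1 = Sum.inr g →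
      N.r 2 g ∉ N.faceOf fN → (P.r 2 x).1 = Sum.inr (N.r 2 g))
    (h2c : ∀ (j : ℕ) (x : ↥(connSumFlags M N fM fN)),
      x.1 = Sum.inl (M.r 2 ((M.faceStep)^[j] fM)) →
      (P.r 2 x).1 = Sum.inr (N.r 2 ((N.faceStep)^[j] fN)))
    (h2d : ∀ (j : ℕ) (x : ↥(connSumFlags M N fM fN)),
      x.1 = Sum.inl (M.r 2 ((M.faceStep)^[j] (M.r 1 fM))) →
      (P.r 2 x).1 = Sum.inr (N.r 2 ((N.faceStep)^[j] (N.r 1 fN))))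
    (I : Set (Fin 3)) (hI : M.Colorable I) (hJ : N.Colorable I) :
    P.Colorable I := by
  obtain ⟨a, ha⟩ := hI
  obtain ⟨b, hb⟩ := hJ
  have hP : IsConnSum M N fM fN P :=
    { r_of_ne_two := by
        intro j hj
        fin_cases j
        exacts [h0, h1, absurd rfl hj]
      r_two_inl := h2a
      r_two_inr := h2b
      r_two_faceFlag := by
        rintro (_ | _) j
        exacts [h2c j, h2d j] }
  have hb' : N.IsColoring I fun g => b g + (a fM + I.indicator 1 2 - b fN) := hb.add_const _
  exact ⟨_, hP.isColoring_elim hM2 hMfin hNfin ha hb' (add_sub_cancel _ _)⟩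
end

section
/- For a map M, T(M) is the full power set of {0,1,2} (i.e., M admits an I-coloring for every subset I of {0,1,2}) if and only if {0,1,2} ∈ T(M), {0,1,2} ∈ T(opp(M)), and {0,1,2} ∈ T(P(M)) (i.e., M, opp(M) and P(M) each admit an {0,1,2}-coloring, which is the combinatorial formulation of all three being orientable). -/
/-- The connections `(r₀, r₁, r₀r₂)` of the opposite map `opp(M)`
(`f·(r₀r₂)` means apply `r₀`, then `r₂`). -/
def oppConn {Ω : Type} (M : CMap Ω) : Fin 3 → Ω → Ω :=
  ![fun f => M.r 0 f, fun f => M.r 1 f, fun f => M.r 2 (M.r 0 f)]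

/-- The connections `(r₀r₂, r₁, r₂)` of the Petrie map `P(M)`. -/
def petrieConn {Ω : Type} (M : CMap Ω) : Fin 3 → Ω → Ω :=
  ![fun f => M.r 2 (M.r 0 f), fun f => M.r 1 f, fun f => M.r 2 f]

/-! Adding an `I`-coloring and a `J`-coloring gives an `I ∆ J`-coloring, so the colorable subsets
form a subspace of the power set over `ℤ/2ℤ`. The `{0,1,2}`-colorings of `opp(M)` and of `P(M)` are
the `{0,1}`-colorings and the `{1,2}`-colorings of `M`, and `{0,1,2}`, `{0,1}`, `{1,2}` span the
power set. -/

open scoped symmDiff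

section Connections

variable {Ω : Type} {r : Fin 3 → Ω → Ω} {I J : Set (Fin 3)} {a b : Ω → ZMod 2}

theorem IsColoringOn.zero : IsColoringOn r ∅ 0 := by
  simp [IsColoringOn]

theorem IsColoringOn.add (ha : IsColoringOn r I a) (hb : IsColoringOn r J b) :
    IsColoringOn r (I ∆ J) (a + b) := by
  intro f j
  have add_one_add_one (x : ZMod 2) : x + 1 + 1 = x := by
    rw [add_assoc, CharTwo.add_self_eq_zero, add_zero]
  by_cases hI : j ∈ I <;> by_cases hJ : j ∈ J <;>
    simp [Set.mem_symmDiff, hI, hJ, ha f j, hb f j, ← add_assoc, add_right_comm (a f) 1,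
      add_one_add_one]

theorem ColorableOn.empty : ColorableOn r ∅ :=
  ⟨0, .zero⟩

theorem ColorableOn.symmDiff : ColorableOn r I → ColorableOn r J → ColorableOn r (I ∆ J)
  | ⟨a, ha⟩, ⟨b, hb⟩ => ⟨a + b, ha.add hb⟩

theorem ColorableOn.of_forall_singleton (h : ∀ i, ColorableOn r {i}) : ColorableOn r I := by
  induction I, I.toFinite using Set.Finite.induction_on with
  | empty => exact .empty
  | @insert i s hi _ hs =>
    have insert_eq : insert i s = {i} ∆ s :=
      (Set.disjoint_singleton_left.mpr hi).symmDiff_eq_sup.symm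
    exact insert_eq ▸ (h i).symmDiff hs

theorem forall_colorableOn_iff :
    (∀ I, ColorableOn r I) ↔
      ColorableOn r {0, 1, 2} ∧ ColorableOn r {0, 1} ∧ ColorableOn r {1, 2} := by
  refine ⟨fun h => ⟨h _, h _, h _⟩, fun ⟨h012, h01, h12⟩ _ => .of_forall_singleton ?_⟩
  have eq_zero : ({0, 1, 2} ∆ {1, 2} : Set (Fin 3)) = {0} := by
    ext i; fin_cases i <;> simp [Set.mem_symmDiff]
  have eq_two : ({0, 1, 2} ∆ {0, 1} : Set (Fin 3)) = {2} := by
    ext i; fin_cases i <;> simp [Set.mem_symmDiff]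
  have eq_one : ({0, 1} ∆ {0} : Set (Fin 3)) = {1} := by
    ext i; fin_cases i <;> simp [Set.mem_symmDiff]
  have h0 : ColorableOn r {0} := eq_zero ▸ h012.symmDiff h12
  have h1 : ColorableOn r {1} := eq_one ▸ h01.symmDiff h0
  have h2 : ColorableOn r {2} := eq_two ▸ h012.symmDiff h01
  exact Fin.forall_fin_succ.mpr ⟨h0, Fin.forall_fin_two.mpr ⟨h1, h2⟩⟩

theorem isColoringOn_zero_one_two_iff :
    IsColoringOn r {0, 1, 2} a ↔
      (∀ f, a (r 0 f) = a f + 1) ∧ (∀ f, a (r 1 f) = a f + 1) ∧ ∀ f, a (r 2 f) = a f + 1 := by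
  simp [IsColoringOn, Fin.forall_fin_succ, forall_and]

theorem isColoringOn_zero_one_iff :
    IsColoringOn r {0, 1} a ↔
      (∀ f, a (r 0 f) = a f + 1) ∧ (∀ f, a (r 1 f) = a f + 1) ∧ ∀ f, a (r 2 f) = a f := by
  simp [IsColoringOn, Fin.forall_fin_succ, forall_and, and_assoc]

theorem isColoringOn_one_two_iff :
    IsColoringOn r {1, 2} a ↔
      (∀ f, a (r 0 f) = a f) ∧ (∀ f, a (r 1 f) = a f + 1) ∧ ∀ f, a (r 2 f) = a f + 1 := by
  simp [IsColoringOn, Fin.forall_fin_succ, forall_and, and_comm]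

/-- The opposite operation on arbitrary connections, with `r 0` applied before `r 2`
as in `oppConn`. -/
def oppositeConnections (r : Fin 3 → Ω → Ω) : Fin 3 → Ω → Ω :=
  ![r 0, r 1, r 2 ∘ r 0]

/-- The Petrie operation on arbitrary connections, with `r 0` applied before `r 2`
as in `petrieConn`. -/
def petrieConnections (r : Fin 3 → Ω → Ω) : Fin 3 → Ω → Ω :=
  ![r 2 ∘ r 0, r 1, r 2]

theorem isColoringOn_oppositeConnections_iff (hr : Function.Surjective (r 0)) :
    IsColoringOn (oppositeConnections r) {0, 1, 2} a ↔ IsColoringOn r {0, 1} a := by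
  rw [isColoringOn_zero_one_two_iff, isColoringOn_zero_one_iff]
  refine and_congr_right fun (h0 : ∀ f, a (r 0 f) = a f + 1) => and_congr_right fun _ => ?_
  calc (∀ f, a (r 2 (r 0 f)) = a f + 1)
    _ ↔ ∀ f, a (r 2 (r 0 f)) = a (r 0 f) := by simp only [h0]
    _ ↔ ∀ g, a (r 2 g) = a g :=
      (hr.forall (p := fun g => a (r 2 g) = a g)).symm

theorem isColoringOn_petrieConnections_iff :
    IsColoringOn (petrieConnections r) {0, 1, 2} a ↔ IsColoringOn r {1, 2} a := by
  rw [isColoringOn_zero_one_two_iff, isColoringOn_one_two_iff]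
  refine and_congr_left fun ⟨_, (h2 : ∀ f, a (r 2 f) = a f + 1)⟩ => ?_
  calc (∀ f, a (r 2 (r 0 f)) = a f + 1)
    _ ↔ ∀ f, a (r 0 f) + 1 = a f + 1 := by simp only [h2]
    _ ↔ ∀ f, a (r 0 f) = a f := by simp only [add_left_inj]

theorem T_univ_iff_orientable_derivates_general (hr : Function.Surjective (r 0)) :
    (∀ I, ColorableOn r I) ↔
      ColorableOn r {0, 1, 2} ∧ ColorableOn (oppositeConnections r) {0, 1, 2} ∧
        ColorableOn (petrieConnections r) {0, 1, 2} := by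
  have opposite_iff : ColorableOn (oppositeConnections r) {0, 1, 2} ↔ ColorableOn r {0, 1} :=
    exists_congr fun _ => isColoringOn_oppositeConnections_iff hr
  have petrie_iff : ColorableOn (petrieConnections r) {0, 1, 2} ↔ ColorableOn r {1, 2} :=
    exists_congr fun _ => isColoringOn_petrieConnections_iff
  rw [forall_colorableOn_iff, opposite_iff, petrie_iff]

end Connections

/-- `T M` is the full power set of `{0,1,2}` iff `M`, `opp(M)`
and `P(M)` all admit `{0,1,2}`-colorings (i.e. all three are orientable). -/
theorem T_univ_iff_orientable_derivates {Ω : Type} (M : CMap Ω) :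
    M.T = Set.univ ↔
      (M.Colorable {0, 1, 2} ∧ ColorableOn (oppConn M) {0, 1, 2} ∧
        ColorableOn (petrieConn M) {0, 1, 2}) :=
  Set.eq_univ_iff_forall.trans
    (T_univ_iff_orientable_derivates_general (r := fun j f => M.r j f) (M.r 0).surjective)
end
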